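/- Let T and S be bounded linear operators on H each admitting an A-adjoint. Then ω_A(TS) ≤ (1/2) · ω_A(ST) + (1/4) · ( ‖T‖_A · ‖S‖_A + ‖TS‖_A ). -/

import Mathlib

noncomputable section

open ContinuousLinearMap

variable {H : Type*} [NormedAddCommGroup H] [InnerProductSpace ℂ H] [CompleteSpace H]

/-- The semi-inner product induced by the positive operator `A`: `⟨x, y⟩_A := ⟨A x, y⟩`. -/
def innA (A : H →L[ℂ] H) (x y : H) : ℂ := inner ℂ (A x) y

/-- The seminorm induced by `A`: `‖x‖_A := ⟨x, x⟩_A ^ (1/2)`. -/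
def vnormA (A : H →L[ℂ] H) (x : H) : ℝ := Real.sqrt (innA A x x).re

/-- The `A`-operator seminorm: `‖T‖_A := sup {‖T x‖_A : ‖x‖_A = 1}`. -/
def opNormA (A T : H →L[ℂ] H) : ℝ :=
  sSup {c : ℝ | ∃ x : H, vnormA A x = 1 ∧ c = vnormA A (T x)}

/-- The `A`-numerical radius: `ω_A(T) := sup {|⟨T x, x⟩_A| : ‖x‖_A = 1}`. -/
def wA (A T : H →L[ℂ] H) : ℝ :=
  sSup {c : ℝ | ∃ x : H, vnormA A x = 1 ∧ c = ‖innA A (T x) x‖}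

/-- `T` admits an `A`-adjoint: there is a bounded operator `X` with `A X = T* A`. -/
def HasAAdjoint (A T : H →L[ℂ] H) : Prop :=
  ∃ X : H →L[ℂ] H, A ∘L X = adjoint T ∘L A

/-- `X` is the reduced `A`-adjoint `T^{♯_A}` of `T`: it solves `A X = T* A` and its range
is contained in the closure of the range of `A`. -/
def IsReducedAAdjoint (A T X : H →L[ℂ] H) : Prop :=
  (A ∘L X = adjoint T ∘L A) ∧ ∀ y : H, X y ∈ closure (Set.range A)

/-!
The seminorm of `A` is the norm of `A ^ (1/2) x`, and an operator with an `A`-adjoint is bounded for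
it (Krein), so it extends to the closure `K` of the range of `A ^ (1/2)`; there the `A`-seminorm and
the `A`-numerical radius become the norm and the numerical radius. For operators `T`, `S` between
Hilbert spaces, `T S + (T S)†` factors as the row `[T, S†]` times the column `[S; T†]`. It is
self-adjoint, so its norm is its spectral radius, which does not change when the factors are swapped
and is at most the numerical radius of the block operator `[S T, S S†; T† T, T† S†]`. The diagonal
of this block operator contributes at most `ω(S T)`, and the off-diagonal part at most
`‖T† T + S S†‖ / 2 ≤ (max ‖T‖ ‖S‖ ^ 2 + ‖T S‖) / 2`. Rotating `T` by unit scalars turns the norms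
of `T S + (T S)†` into `2 ω(T S)`, and normalising `T` and `S` turns `max ‖T‖ ‖S‖ ^ 2` into
`‖T‖ ‖S‖`.
-/

open scoped InnerProduct InnerProductSpace

section Spectrum

variable {𝕜 E F : Type*} [NormedField 𝕜] [NormedAddCommGroup E] [NormedSpace 𝕜 E]
  [NormedAddCommGroup F] [NormedSpace 𝕜 F]

theorem isUnit_algebraMap_sub_comp_swap {k : 𝕜} (hk : k ≠ 0) {R : F →L[𝕜] E} {C : E →L[𝕜] F}
    (h : IsUnit (algebraMap 𝕜 (F →L[𝕜] F) k - C ∘L R)) :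
    IsUnit (algebraMap 𝕜 (E →L[𝕜] E) k - R ∘L C) := by
  obtain ⟨⟨_, V, hUV, hVU⟩, rfl⟩ := h
  have hright : ∀ y, k • V y - C (R (V y)) = y := fun y => by simpa using DFunLike.congr_fun hUV y
  have hleft : ∀ y, V (k • y - C (R y)) = y := fun y => by simpa using DFunLike.congr_fun hVU y
  -- The geometric series for the resolvent suggests `(k - R C)⁻¹ = k⁻¹ (1 + R (k - C R)⁻¹ C)`.
  refine ⟨⟨_, k⁻¹ • (1 + R ∘L V ∘L C), ?_, ?_⟩, rfl⟩
  · ext x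
    have hx : k⁻¹ • R (C x) + k⁻¹ • R (C (R (V (C x)))) = R (V (C x)) := by
      rw [← smul_add, inv_smul_eq_iff₀ hk, ← map_smul, ← map_add,
        eq_add_of_sub_eq (hright (C x))]
    simp [hk, hx]
  · ext x
    have hx := congrArg R (hleft (C x))
    simp only [map_sub, map_smul] at hx
    simp [smul_sub, smul_smul, hk, hx]

theorem spectralRadius_comp_le_swap (R : F →L[𝕜] E) (C : E →L[𝕜] F) :
    spectralRadius 𝕜 (R ∘L C) ≤ spectralRadius 𝕜 (C ∘L R) := by
  refine iSup₂_le fun k hk => ?_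
  rcases eq_or_ne k 0 with rfl | hk0
  · simp
  · exact le_iSup₂_of_le k (fun h => hk (isUnit_algebraMap_sub_comp_swap hk0 h)) le_rfl

end Spectrum

section NumericalRadius

variable {𝕜 E F : Type*} [RCLike 𝕜] [NormedAddCommGroup E] [InnerProductSpace 𝕜 E]
  [NormedAddCommGroup F] [InnerProductSpace 𝕜 F]

/-- The numerical radius `sup {|⟪T x, x⟫| : ‖x‖ = 1}` of a bounded operator, written as a supremum
of quotients over all vectors, the zero vector contributing `0 / 0 = 0`. -/
def numericalRadius (T : E →L[𝕜] E) : ℝ := ⨆ x, ‖⟪T x, x⟫_𝕜‖ / ‖x‖ ^ 2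

theorem numericalRadius_nonneg (T : E →L[𝕜] E) : 0 ≤ numericalRadius T :=
  Real.iSup_nonneg fun _ => by positivity

theorem norm_inner_le_numericalRadius_mul (T : E →L[𝕜] E) (x : E) :
    ‖⟪T x, x⟫_𝕜‖ ≤ numericalRadius T * ‖x‖ ^ 2 := by
  have hbdd : BddAbove (Set.range fun y => ‖⟪T y, y⟫_𝕜‖ / ‖y‖ ^ 2) := by
    refine ⟨‖T‖, Set.forall_mem_range.2 fun y => ?_⟩
    refine div_le_of_le_mul₀ (by positivity) (by positivity) ?_
    calc ‖⟪T y, y⟫_𝕜‖ ≤ ‖T y‖ * ‖y‖ := norm_inner_le_norm _ _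
      _ ≤ ‖T‖ * ‖y‖ * ‖y‖ := by gcongr; exact T.le_opNorm y
      _ = ‖T‖ * ‖y‖ ^ 2 := by ring
  rcases eq_or_ne x 0 with rfl | hx
  · simp
  · exact (div_le_iff₀ (by positivity)).1 (le_ciSup hbdd x)

theorem numericalRadius_le {T : E →L[𝕜] E} {w : ℝ} (hw : 0 ≤ w)
    (h : ∀ x, ‖⟪T x, x⟫_𝕜‖ ≤ w * ‖x‖ ^ 2) : numericalRadius T ≤ w :=
  ciSup_le fun x => div_le_of_le_mul₀ (by positivity) hw (h x)

theorem numericalRadius_zero : numericalRadius (0 : E →L[𝕜] E) = 0 := by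
  simp [numericalRadius]

theorem numericalRadius_smul (c : 𝕜) (T : E →L[𝕜] E) :
    numericalRadius (c • T) = ‖c‖ * numericalRadius T := by
  simp only [numericalRadius, Real.mul_iSup_of_nonneg (norm_nonneg c), smul_apply, inner_smul_left,
    norm_mul, RCLike.norm_conj, mul_div_assoc]

theorem numericalRadius_le_of_norm_add_adjoint_le [CompleteSpace E] {T : E →L[𝕜] E} {w : ℝ}
    (hw : 0 ≤ w) (h : ∀ c : 𝕜, ‖c‖ = 1 → ‖c • T + (c • T)†‖ ≤ 2 * w) :
    numericalRadius T ≤ w := by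
  refine numericalRadius_le hw fun x => ?_
  obtain ⟨c, hc, hcx⟩ := RCLike.exists_norm_eq_mul_self ⟪T x, x⟫_𝕜
  set B := (starRingEnd 𝕜 c) • T
  have hB : ⟪B x, x⟫_𝕜 = ‖⟪T x, x⟫_𝕜‖ := by
    rw [smul_apply, inner_smul_left, RCLike.conj_conj, hcx]
  have hsum : 2 * ‖⟪T x, x⟫_𝕜‖ = RCLike.re ⟪(B + B†) x, x⟫_𝕜 := by
    rw [add_apply, inner_add_left, adjoint_inner_left, ← inner_conj_symm x, hB, map_add,
      RCLike.conj_re, RCLike.ofReal_re, two_mul]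
  have hle : RCLike.re ⟪(B + B†) x, x⟫_𝕜 ≤ 2 * w * ‖x‖ ^ 2 :=
    calc RCLike.re ⟪(B + B†) x, x⟫_𝕜 ≤ ‖(B + B†) x‖ * ‖x‖ := re_inner_le_norm _ _
      _ ≤ 2 * w * ‖x‖ * ‖x‖ := by
        gcongr
        exact le_of_opNorm_le _ (h _ (by rw [RCLike.norm_conj, hc])) x
      _ = 2 * w * ‖x‖ ^ 2 := by ring
  linarith

theorem spectralRadius_le_numericalRadius [CompleteSpace E] (T : E →L[𝕜] E) :
    spectralRadius 𝕜 T ≤ ENNReal.ofReal (numericalRadius T) := by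
  refine iSup₂_le fun k hk => ?_
  by_contra! hlt
  have hgap : 0 < ‖k‖ - numericalRadius T := by
    rw [← enorm_eq_nnnorm, ← ofReal_norm,
      ENNReal.ofReal_lt_ofReal_iff_of_nonneg (numericalRadius_nonneg T)] at hlt
    exact sub_pos.2 hlt
  refine hk (isUnit_of_forall_le_norm_inner_map _ (c := ⟨_, hgap.le⟩) hgap fun x => ?_)
  have hkx : ‖⟪k • x, x⟫_𝕜‖ = ‖k‖ * ‖x‖ ^ 2 := by
    rw [inner_smul_left, norm_mul, RCLike.norm_conj, inner_self_eq_norm_sq_to_K, norm_pow,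
      RCLike.norm_ofReal, abs_norm]
  calc ‖x‖ ^ 2 * (‖k‖ - numericalRadius T)
      = ‖⟪k • x, x⟫_𝕜‖ - numericalRadius T * ‖x‖ ^ 2 := by rw [hkx]; ring
    _ ≤ ‖⟪k • x, x⟫_𝕜‖ - ‖⟪T x, x⟫_𝕜‖ := by gcongr; exact norm_inner_le_numericalRadius_mul T x
    _ ≤ ‖⟪k • x - T x, x⟫_𝕜‖ := by rw [inner_sub_left]; exact norm_sub_norm_le _ _

theorem norm_comp_le_numericalRadius_swap [CompleteSpace E] [CompleteSpace F] {R : F →L[𝕜] E}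
    {C : E →L[𝕜] F} (h : IsSelfAdjoint (R ∘L C)) : ‖R ∘L C‖ ≤ numericalRadius (C ∘L R) := by
  have hle := (spectralRadius_comp_le_swap R C).trans (spectralRadius_le_numericalRadius (C ∘L R))
  rwa [spectralRadius_eq_nnnorm _ h, ← enorm_eq_nnnorm, ← ofReal_norm,
    ENNReal.ofReal_le_ofReal_iff (numericalRadius_nonneg _)] at hle

end NumericalRadius

section RowOperator

variable {𝕜 E F G : Type*} [RCLike 𝕜] [NormedAddCommGroup E] [InnerProductSpace 𝕜 E]
  [NormedAddCommGroup F] [InnerProductSpace 𝕜 F] [NormedAddCommGroup G] [InnerProductSpace 𝕜 G]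

/-- The row operator `[P Q] : E ⊕ F → G`, `(u, v) ↦ P u + Q v`, on the Hilbert direct sum; its
adjoint is the column operator with entries `P†` and `Q†`. -/
def rowOperator (P : E →L[𝕜] G) (Q : F →L[𝕜] G) : WithLp 2 (E × F) →L[𝕜] G :=
  P.coprod Q ∘L (WithLp.prodContinuousLinearEquiv 2 𝕜 E F : WithLp 2 (E × F) →L[𝕜] E × F)

theorem rowOperator_apply (P : E →L[𝕜] G) (Q : F →L[𝕜] G) (y : WithLp 2 (E × F)) :
    rowOperator P Q y = P y.fst + Q y.snd := rfl

variable [CompleteSpace E] [CompleteSpace G]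

theorem norm_rowOperator_sq_le (P : E →L[𝕜] G) (Q : F →L[𝕜] G) :
    ‖rowOperator P Q‖ ^ 2 ≤ max ‖P‖ ‖Q‖ ^ 2 + ‖(P†) ∘L Q‖ := by
  set τ := max ‖P‖ ‖Q‖
  set p := ‖(P†) ∘L Q‖
  have hbound : ∀ y, ‖rowOperator P Q y‖ ≤ √(τ ^ 2 + p) * ‖y‖ := fun y => by
    refine abs_le_of_sq_le_sq' ?_ (by positivity) |>.2
    have hP : ‖P y.fst‖ ≤ τ * ‖y.fst‖ := le_of_opNorm_le _ (le_max_left _ _) _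
    have hQ : ‖Q y.snd‖ ≤ τ * ‖y.snd‖ := le_of_opNorm_le _ (le_max_right _ _) _
    have hcross : RCLike.re ⟪P y.fst, Q y.snd⟫_𝕜 ≤ ‖y.fst‖ * (p * ‖y.snd‖) := by
      rw [← adjoint_inner_right]
      exact (re_inner_le_norm _ _).trans (by gcongr; exact le_opNorm ((P†) ∘L Q) _)
    calc ‖rowOperator P Q y‖ ^ 2
        = ‖P y.fst‖ ^ 2 + 2 * RCLike.re ⟪P y.fst, Q y.snd⟫_𝕜 + ‖Q y.snd‖ ^ 2 :=
          norm_add_sq _ _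
      _ ≤ (τ * ‖y.fst‖) ^ 2 + 2 * (‖y.fst‖ * (p * ‖y.snd‖)) + (τ * ‖y.snd‖) ^ 2 := by gcongr
      _ ≤ (τ ^ 2 + p) * (‖y.fst‖ ^ 2 + ‖y.snd‖ ^ 2) := by
        have hp : 0 ≤ p := norm_nonneg _
        nlinarith [mul_le_mul_of_nonneg_left (two_mul_le_add_sq ‖y.fst‖ ‖y.snd‖) hp]
      _ = (√(τ ^ 2 + p) * ‖y‖) ^ 2 := by
        rw [mul_pow, Real.sq_sqrt (by positivity), WithLp.prod_norm_sq_eq_of_L2]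
  exact (Real.le_sqrt (norm_nonneg _) (by positivity)).1 (opNorm_le_bound _ (by positivity) hbound)

variable [CompleteSpace F]

theorem adjoint_rowOperator_apply (P : E →L[𝕜] G) (Q : F →L[𝕜] G) (x : G) :
    ((rowOperator P Q)†) x = WithLp.toLp 2 ((P†) x, (Q†) x) := by
  refine ext_inner_right 𝕜 fun y => ?_
  simp only [adjoint_inner_left, rowOperator_apply, inner_add_right, WithLp.prod_inner_apply]
  rfl

theorem norm_adjoint_rowOperator_apply_sq (P : E →L[𝕜] G) (Q : F →L[𝕜] G) (x : G) :
    ‖((rowOperator P Q)†) x‖ ^ 2 = ‖(P†) x‖ ^ 2 + ‖(Q†) x‖ ^ 2 := by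
  rw [adjoint_rowOperator_apply, WithLp.prod_norm_sq_eq_of_L2]
  rfl

end RowOperator

section Product

variable {𝕜 E F : Type*} [RCLike 𝕜] [NormedAddCommGroup E] [InnerProductSpace 𝕜 E]
  [CompleteSpace E] [NormedAddCommGroup F] [InnerProductSpace 𝕜 F] [CompleteSpace F]

theorem norm_sq_add_norm_adjoint_sq_le (T : F →L[𝕜] E) (S : E →L[𝕜] F) (u : F) :
    ‖T u‖ ^ 2 + ‖(S†) u‖ ^ 2 ≤ (max ‖T‖ ‖S‖ ^ 2 + ‖T ∘L S‖) * ‖u‖ ^ 2 := by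
  have hrow := norm_rowOperator_sq_le (T†) S
  rw [adjoint_adjoint, LinearIsometryEquiv.norm_map] at hrow
  calc ‖T u‖ ^ 2 + ‖(S†) u‖ ^ 2 = ‖((rowOperator (T†) S)†) u‖ ^ 2 := by
        rw [norm_adjoint_rowOperator_apply_sq, adjoint_adjoint]
    _ ≤ (‖rowOperator (T†) S‖ * ‖u‖) ^ 2 := by
        gcongr
        exact le_of_opNorm_le _ (LinearIsometryEquiv.norm_map _ _).le u
    _ ≤ (max ‖T‖ ‖S‖ ^ 2 + ‖T ∘L S‖) * ‖u‖ ^ 2 := by rw [mul_pow]; gcongr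

-- The operator on the left is the block matrix `[S T, S S†; T† T, T† S†]`.
theorem numericalRadius_adjoint_rowOperator_comp_rowOperator_le (T : F →L[𝕜] E) (S : E →L[𝕜] F) :
    numericalRadius (((rowOperator (S†) T)†) ∘L rowOperator T (S†)) ≤
      numericalRadius (S ∘L T) + (max ‖T‖ ‖S‖ ^ 2 + ‖T ∘L S‖) / 2 := by
  have hw := numericalRadius_nonneg (S ∘L T)
  refine numericalRadius_le (by positivity) fun y => ?_
  rw [WithLp.prod_norm_sq_eq_of_L2, comp_apply, adjoint_inner_left, rowOperator_apply,
    rowOperator_apply]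
  set u := y.fst
  set v := y.snd
  have huu : ‖⟪T u, (S†) u⟫_𝕜‖ ≤ numericalRadius (S ∘L T) * ‖u‖ ^ 2 := by
    rw [adjoint_inner_right]
    exact norm_inner_le_numericalRadius_mul (S ∘L T) u
  have hvv : ‖⟪(S†) v, T v⟫_𝕜‖ ≤ numericalRadius (S ∘L T) * ‖v‖ ^ 2 := by
    rw [adjoint_inner_left, norm_inner_symm]
    exact norm_inner_le_numericalRadius_mul (S ∘L T) v
  have huv : ‖⟪T u, T v⟫_𝕜‖ + ‖⟪(S†) v, (S†) u⟫_𝕜‖ ≤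
      (max ‖T‖ ‖S‖ ^ 2 + ‖T ∘L S‖) / 2 * (‖u‖ ^ 2 + ‖v‖ ^ 2) := by
    linarith [norm_inner_le_norm (𝕜 := 𝕜) (T u) (T v), two_mul_le_add_sq ‖T u‖ ‖T v‖,
      norm_inner_le_norm (𝕜 := 𝕜) ((S†) v) ((S†) u), two_mul_le_add_sq ‖(S†) v‖ ‖(S†) u‖,
      norm_sq_add_norm_adjoint_sq_le T S u, norm_sq_add_norm_adjoint_sq_le T S v]
  calc ‖⟪T u + (S†) v, (S†) u + T v⟫_𝕜‖
      = ‖(⟪T u, (S†) u⟫_𝕜 + ⟪(S†) v, T v⟫_𝕜) + (⟪T u, T v⟫_𝕜 + ⟪(S†) v, (S†) u⟫_𝕜)‖ := by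
        simp only [inner_add_left, inner_add_right]; congr 1; ring
    _ ≤ (‖⟪T u, (S†) u⟫_𝕜‖ + ‖⟪(S†) v, T v⟫_𝕜‖) +
          (‖⟪T u, T v⟫_𝕜‖ + ‖⟪(S†) v, (S†) u⟫_𝕜‖) :=
        (norm_add_le _ _).trans (add_le_add (norm_add_le _ _) (norm_add_le _ _))
    _ ≤ _ := by linarith

theorem norm_comp_add_adjoint_le (T : F →L[𝕜] E) (S : E →L[𝕜] F) :
    ‖T ∘L S + (T ∘L S)†‖ ≤
      numericalRadius (S ∘L T) + (max ‖T‖ ‖S‖ ^ 2 + ‖T ∘L S‖) / 2 := by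
  have hfactor : rowOperator T (S†) ∘L ((rowOperator (S†) T)†) = T ∘L S + (T ∘L S)† := by
    ext x
    simp only [comp_apply, adjoint_rowOperator_apply, rowOperator_apply, adjoint_adjoint,
      adjoint_comp, add_apply]
    rfl
  rw [← hfactor]
  refine (norm_comp_le_numericalRadius_swap ?_).trans
    (numericalRadius_adjoint_rowOperator_comp_rowOperator_le T S)
  rw [hfactor]
  exact IsSelfAdjoint.add_star_self (T ∘L S)

theorem numericalRadius_comp_le_of_max_norm (T : F →L[𝕜] E) (S : E →L[𝕜] F) :
    numericalRadius (T ∘L S) ≤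
      numericalRadius (S ∘L T) / 2 + (max ‖T‖ ‖S‖ ^ 2 + ‖T ∘L S‖) / 4 := by
  have hw := numericalRadius_nonneg (S ∘L T)
  refine numericalRadius_le_of_norm_add_adjoint_le (by positivity) fun c hc => ?_
  have h := norm_comp_add_adjoint_le (c • T) S
  rw [smul_comp, comp_smul, numericalRadius_smul, norm_smul, norm_smul, hc, one_mul, one_mul,
    one_mul] at h
  linarith

theorem numericalRadius_comp_le (T : F →L[𝕜] E) (S : E →L[𝕜] F) :
    numericalRadius (T ∘L S) ≤
      numericalRadius (S ∘L T) / 2 + (‖T‖ * ‖S‖ + ‖T ∘L S‖) / 4 := by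
  rcases eq_or_ne T 0 with rfl | hT
  · simp [numericalRadius_zero]
  rcases eq_or_ne S 0 with rfl | hS
  · simp [numericalRadius_zero]
  have hT' : 0 < ‖T‖ := norm_pos_iff.2 hT
  have hS' : 0 < ‖S‖ := norm_pos_iff.2 hS
  have h := numericalRadius_comp_le_of_max_norm ((‖T‖⁻¹ : 𝕜) • T) ((‖S‖⁻¹ : 𝕜) • S)
  simp only [smul_comp, comp_smul, numericalRadius_smul, norm_smul, norm_inv, RCLike.norm_ofReal,
    abs_norm, inv_mul_cancel₀ hT'.ne', inv_mul_cancel₀ hS'.ne', max_self] at h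
  field_simp at h ⊢
  linarith

end Product

section SymmetrizableOperator

theorem le_of_forall_pow_two_pow_le_mul {a b C : ℝ} (hb : 0 ≤ b)
    (h : ∀ n : ℕ, a ^ 2 ^ n ≤ C * b ^ 2 ^ n) : a ≤ b := by
  rcases hb.eq_or_lt with rfl | hb
  · simpa using h 0
  by_contra! hlt
  have hratio : 1 < a / b := (one_lt_div hb).2 hlt
  obtain ⟨n, hn⟩ := pow_unbounded_of_one_lt C hratio
  have hle : (a / b) ^ 2 ^ n ≤ C := by
    rw [div_pow, div_le_iff₀ (by positivity)]
    exact h n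
  exact (hn.trans_le (pow_le_pow_right₀ hratio.le Nat.lt_two_pow_self.le)).not_ge hle

variable {𝕜 V K : Type*} [RCLike 𝕜] [NormedAddCommGroup V] [NormedSpace 𝕜 V]
  [NormedAddCommGroup K] [InnerProductSpace 𝕜 K] {J : V →L[𝕜] K} {B T X : V →L[𝕜] V}

theorem inner_pow_apply_left (hB : ∀ x y, ⟪J (B x), J y⟫_𝕜 = ⟪J x, J (B y)⟫_𝕜) (n : ℕ) (x y : V) :
    ⟪J ((B ^ n) x), J y⟫_𝕜 = ⟪J x, J ((B ^ n) y)⟫_𝕜 := by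
  induction n generalizing x with
  | zero => rfl
  | succ n ih =>
    rw [pow_succ, mul_apply_eq_comp, ih, hB, ← mul_apply_eq_comp, ← pow_succ', pow_succ]

theorem norm_pow_apply_sq_le (hB : ∀ x y, ⟪J (B x), J y⟫_𝕜 = ⟪J x, J (B y)⟫_𝕜) (n : ℕ) (x : V) :
    ‖J ((B ^ n) x)‖ ^ 2 ≤ ‖J x‖ * ‖J ((B ^ (n * 2)) x)‖ :=
  calc ‖J ((B ^ n) x)‖ ^ 2 = RCLike.re ⟪J x, J ((B ^ (n * 2)) x)⟫_𝕜 := by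
        rw [mul_two, pow_add, mul_apply_eq_comp, ← inner_pow_apply_left hB, inner_self_eq_norm_sq]
    _ ≤ ‖J x‖ * ‖J ((B ^ (n * 2)) x)‖ := re_inner_le_norm _ _

theorem norm_apply_le_of_symmetric (hB : ∀ x y, ⟪J (B x), J y⟫_𝕜 = ⟪J x, J (B y)⟫_𝕜) (x : V) :
    ‖J (B x)‖ ≤ ‖B‖ * ‖J x‖ := by
  rcases (norm_nonneg (J x)).eq_or_lt with hx | hx
  · have hsq := norm_pow_apply_sq_le hB 1 x
    rw [pow_one, ← hx, zero_mul] at hsq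
    rw [← hx, mul_zero]
    exact (pow_eq_zero_iff two_ne_zero).1 (hsq.antisymm (sq_nonneg _)) |>.le
  -- Squaring repeatedly compares the ratio `‖J (B x)‖ / ‖J x‖` with the growth of `‖B ^ 2 ^ n‖`.
  have horbit : ∀ n : ℕ, (‖J (B x)‖ / ‖J x‖) ^ 2 ^ n ≤ ‖J ((B ^ 2 ^ n) x)‖ / ‖J x‖ := by
    intro n
    induction n with
    | zero => simp
    | succ n ih =>
      calc (‖J (B x)‖ / ‖J x‖) ^ 2 ^ (n + 1)
          = ((‖J (B x)‖ / ‖J x‖) ^ 2 ^ n) ^ 2 := by rw [pow_succ, pow_mul]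
        _ ≤ (‖J ((B ^ 2 ^ n) x)‖ / ‖J x‖) ^ 2 := by gcongr
        _ ≤ ‖J x‖ * ‖J ((B ^ 2 ^ (n + 1)) x)‖ / ‖J x‖ ^ 2 := by
          rw [div_pow, pow_succ 2 n]
          gcongr
          exact norm_pow_apply_sq_le hB _ x
        _ = ‖J ((B ^ 2 ^ (n + 1)) x)‖ / ‖J x‖ := by field_simp
  refine (div_le_iff₀ hx).1
    (le_of_forall_pow_two_pow_le_mul (C := ‖J‖ * ‖x‖ / ‖J x‖) (norm_nonneg B) fun n => ?_)
  calc (‖J (B x)‖ / ‖J x‖) ^ 2 ^ n ≤ ‖J ((B ^ 2 ^ n) x)‖ / ‖J x‖ := horbit n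
    _ ≤ ‖J‖ * (‖B‖ ^ 2 ^ n * ‖x‖) / ‖J x‖ := by
      gcongr
      exact J.le_opNorm_of_le (le_of_opNorm_le _ (norm_pow_le' B (by positivity)) x)
    _ = ‖J‖ * ‖x‖ / ‖J x‖ * ‖B‖ ^ 2 ^ n := by ring

theorem norm_apply_le_of_inner_eq (h : ∀ x y, ⟪J (T x), J y⟫_𝕜 = ⟪J x, J (X y)⟫_𝕜) (x : V) :
    ‖J (T x)‖ ≤ √‖X * T‖ * ‖J x‖ := by
  have h' : ∀ x y, ⟪J (X x), J y⟫_𝕜 = ⟪J x, J (T y)⟫_𝕜 := fun x y => by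
    rw [← inner_conj_symm, ← h, inner_conj_symm]
  have hsymm : ∀ x y, ⟪J ((X * T) x), J y⟫_𝕜 = ⟪J x, J ((X * T) y)⟫_𝕜 := fun x y => by
    rw [mul_apply_eq_comp, mul_apply_eq_comp, h', h]
  refine abs_le_of_sq_le_sq' ?_ (by positivity) |>.2
  calc ‖J (T x)‖ ^ 2 = RCLike.re ⟪J x, J ((X * T) x)⟫_𝕜 := by
        rw [mul_apply_eq_comp, ← h, inner_self_eq_norm_sq]
    _ ≤ ‖J x‖ * ‖J ((X * T) x)‖ := re_inner_le_norm _ _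
    _ ≤ ‖J x‖ * (‖X * T‖ * ‖J x‖) := by gcongr; exact norm_apply_le_of_symmetric hsymm x
    _ = (√‖X * T‖ * ‖J x‖) ^ 2 := by rw [mul_pow, Real.sq_sqrt (norm_nonneg _)]; ring

end SymmetrizableOperator

section Representation

variable {V K : Type*} [NormedAddCommGroup V] [InnerProductSpace ℂ V] [NormedAddCommGroup K]
  [InnerProductSpace ℂ K] {A T : V →L[ℂ] V} {J : V →L[ℂ] K} {T' : K →L[ℂ] K}

/-- `T` is `A`-bounded: it is bounded for the seminorm `‖·‖_A`. The literature writes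
`𝓑_{A^{1/2}}(H)` for this class of operators. -/
def IsABounded (A T : V →L[ℂ] V) : Prop := ∃ c : ℝ, ∀ x, vnormA A (T x) ≤ c * vnormA A x

theorem vnormA_eq_norm (hJ : ∀ x y, innA A x y = ⟪J x, J y⟫_ℂ) (x : V) : vnormA A x = ‖J x‖ := by
  rw [vnormA, hJ]
  exact (norm_eq_sqrt_re_inner (𝕜 := ℂ) (J x)).symm

theorem exists_vnormA_eq_one_and_eq_smul (hJ : ∀ x y, innA A x y = ⟪J x, J y⟫_ℂ) {x : V}
    (hx : J x ≠ 0) : ∃ u, vnormA A u = 1 ∧ x = (‖J x‖ : ℂ) • u := by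
  have hx' : (‖J x‖ : ℂ) ≠ 0 := Complex.ofReal_ne_zero.2 (norm_ne_zero_iff.2 hx)
  refine ⟨(‖J x‖ : ℂ)⁻¹ • x, ?_, by rw [smul_inv_smul₀ hx']⟩
  rw [vnormA_eq_norm hJ, map_smul]
  exact norm_smul_inv_norm (𝕜 := ℂ) hx

theorem opNormA_nonneg (A T : V →L[ℂ] V) : 0 ≤ opNormA A T :=
  Real.sSup_nonneg fun _ ⟨_, _, hc⟩ => hc ▸ Real.sqrt_nonneg _

theorem wA_nonneg (A T : V →L[ℂ] V) : 0 ≤ wA A T :=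
  Real.sSup_nonneg fun _ ⟨_, _, hc⟩ => hc ▸ norm_nonneg _

theorem IsABounded.exists_extension [CompleteSpace K] (hT : IsABounded A T) (hJd : DenseRange J)
    (hJ : ∀ x y, innA A x y = ⟪J x, J y⟫_ℂ) : ∃ T' : K →L[ℂ] K, ∀ x, T' (J x) = J (T x) := by
  obtain ⟨c, hc⟩ := hT
  simp only [vnormA_eq_norm hJ] at hc
  exact ⟨(J ∘L T).toLinearMap.extendOfNorm J.toLinearMap,
    LinearMap.extendOfNorm_eq hJd ⟨c, hc⟩⟩

theorem opNormA_eq_norm (hJd : DenseRange J) (hJ : ∀ x y, innA A x y = ⟪J x, J y⟫_ℂ)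
    (hT' : ∀ x, T' (J x) = J (T x)) : opNormA A T = ‖T'‖ := by
  have hle : ∀ c ∈ {c : ℝ | ∃ x, vnormA A x = 1 ∧ c = vnormA A (T x)}, c ≤ ‖T'‖ := by
    rintro _ ⟨x, hx, rfl⟩
    rw [vnormA_eq_norm hJ] at hx ⊢
    rw [← hT']
    exact T'.unit_le_opNorm _ hx.le
  refine le_antisymm (Real.sSup_le hle (norm_nonneg _)) ?_
  refine opNorm_le_bound _ (opNormA_nonneg A T) fun y => ?_
  refine hJd.induction_on y (isClosed_le (by fun_prop) (by fun_prop)) fun x => ?_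
  rcases eq_or_ne (J x) 0 with hx | hx
  · simp [hx]
  obtain ⟨u, hu, hxu⟩ := exists_vnormA_eq_one_and_eq_smul hJ hx
  have hTu : ‖T' (J u)‖ ≤ opNormA A T :=
    le_csSup ⟨_, hle⟩ ⟨u, hu, by rw [hT', vnormA_eq_norm hJ]⟩
  calc ‖T' (J x)‖ = ‖J x‖ * ‖T' (J u)‖ := by
        conv_lhs => rw [hxu, map_smul, map_smul, norm_smul, Complex.norm_real, norm_norm]
    _ ≤ opNormA A T * ‖J x‖ := by rw [mul_comm]; gcongr

theorem wA_eq_numericalRadius (hJd : DenseRange J) (hJ : ∀ x y, innA A x y = ⟪J x, J y⟫_ℂ)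
    (hT' : ∀ x, T' (J x) = J (T x)) : wA A T = numericalRadius T' := by
  have hle : ∀ c ∈ {c : ℝ | ∃ x, vnormA A x = 1 ∧ c = ‖innA A (T x) x‖},
      c ≤ numericalRadius T' := by
    rintro _ ⟨x, hx, rfl⟩
    rw [vnormA_eq_norm hJ] at hx
    simpa [hJ, hT', hx] using norm_inner_le_numericalRadius_mul T' (J x)
  refine le_antisymm (Real.sSup_le hle (numericalRadius_nonneg _)) ?_
  refine numericalRadius_le (wA_nonneg A T) fun y => ?_
  refine hJd.induction_on y (isClosed_le (by fun_prop) (by fun_prop)) fun x => ?_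
  rcases eq_or_ne (J x) 0 with hx | hx
  · simp [hx]
  obtain ⟨u, hu, hxu⟩ := exists_vnormA_eq_one_and_eq_smul hJ hx
  have hTu : ‖⟪T' (J u), J u⟫_ℂ‖ ≤ wA A T := le_csSup ⟨_, hle⟩ ⟨u, hu, by rw [hT', hJ]⟩
  calc ‖⟪T' (J x), J x⟫_ℂ‖ = ‖J x‖ ^ 2 * ‖⟪T' (J u), J u⟫_ℂ‖ := by
        conv_lhs => rw [hxu, map_smul, map_smul, inner_smul_left, inner_smul_right, norm_mul,
          norm_mul, RCLike.norm_conj, Complex.norm_real, norm_norm, ← mul_assoc, ← sq]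
    _ ≤ wA A T * ‖J x‖ ^ 2 := by rw [mul_comm]; gcongr

end Representation

theorem exists_denseRange_innA_eq_inner {A : H →L[ℂ] H} (hA : A.IsPositive) :
    ∃ (K : Submodule ℂ H) (J : H →L[ℂ] K), CompleteSpace K ∧ DenseRange J ∧
      ∀ x y, innA A x y = ⟪J x, J y⟫_ℂ := by
  set Q := CFC.sqrt A
  have hQ : IsSelfAdjoint Q := .of_nonneg (CFC.sqrt_nonneg A)
  have hQQ : Q * Q = A := CFC.sqrt_mul_sqrt_self A ((nonneg_iff_isPositive A).2 hA)
  let K := Q.range.topologicalClosure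
  have hmem : ∀ x, Q x ∈ K := fun x => Q.range.le_topologicalClosure (LinearMap.mem_range_self _ x)
  refine ⟨K, Q.codRestrict K hmem, inferInstance, fun y => ?_, fun x y => ?_⟩
  · rw [closure_subtype, ← Set.range_comp]
    exact y.2
  · rw [innA, ← hQQ, Submodule.coe_inner]
    exact hQ.isSymmetric (Q x) y

theorem HasAAdjoint.isABounded {A T : H →L[ℂ] H} (hA : A.IsPositive) (hT : HasAAdjoint A T) :
    IsABounded A T := by
  obtain ⟨X, hX⟩ := hT
  obtain ⟨K, J, -, -, hJ⟩ := exists_denseRange_innA_eq_inner hA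
  have hTX : ∀ x y, ⟪J (T x), J y⟫_ℂ = ⟪J x, J (X y)⟫_ℂ := fun x y => by
    rw [← hJ, ← hJ, innA, innA, hA.inner_left_eq_inner_right, hA.inner_left_eq_inner_right,
      ← adjoint_inner_right]
    exact congrArg _ (DFunLike.congr_fun hX y).symm
  refine ⟨√‖X * T‖, fun x => ?_⟩
  rw [vnormA_eq_norm hJ, vnormA_eq_norm hJ]
  exact norm_apply_le_of_inner_eq hTX x

theorem stmt1_general (A : H →L[ℂ] H) (hA : A.IsPositive) (_hA0 : A ≠ 0)
    (T S : H →L[ℂ] H) (hT : IsABounded A T) (hS : IsABounded A S) :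
    wA A (T * S) ≤ (1 / 2) * wA A (S * T) +
      (1 / 4) * (opNormA A T * opNormA A S + opNormA A (T * S)) := by
  obtain ⟨K, J, hK, hJd, hJ⟩ := exists_denseRange_innA_eq_inner hA
  obtain ⟨T', hT'⟩ := hT.exists_extension hJd hJ
  obtain ⟨S', hS'⟩ := hS.exists_extension hJd hJ
  have hTS : ∀ x, (T' ∘L S') (J x) = J ((T * S) x) := fun x => by
    rw [comp_apply, hS', hT', mul_apply_eq_comp]
  have hST : ∀ x, (S' ∘L T') (J x) = J ((S * T) x) := fun x => by
    rw [comp_apply, hT', hS', mul_apply_eq_comp]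
  rw [wA_eq_numericalRadius hJd hJ hTS, wA_eq_numericalRadius hJd hJ hST,
    opNormA_eq_norm hJd hJ hT', opNormA_eq_norm hJd hJ hS', opNormA_eq_norm hJd hJ hTS]
  linarith [numericalRadius_comp_le T' S']

theorem stmt1 (A : H →L[ℂ] H) (hA : A.IsPositive) (hA0 : A ≠ 0)
    (T S : H →L[ℂ] H) (hT : HasAAdjoint A T) (hS : HasAAdjoint A S) :
    wA A (T * S) ≤ (1 / 2) * wA A (S * T) +
      (1 / 4) * (opNormA A T * opNormA A S + opNormA A (T * S)) :=
  stmt1_general A hA hA0 T S (hT.isABounded hA) (hS.isABounded hA)
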